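/- Let 𝒰 ⊆ B(K₁,L₁) and 𝒱 ⊆ B(H₂,K₂) be ternary rings of operators, let H and L be complex Hilbert spaces, and let θ : 𝒰 ⊗ 𝒱 → B(H,L) be a linear map on the algebraic tensor product such that for every p ∈ ℕ and all u_{i,j} ∈ 𝒰, v_{i,j} ∈ 𝒱 (i ∈ {1,2,3}, j ∈ {1,…,p}), setting x_i = Σ_{j=1}^p u_{i,j} ⊗ v_{i,j}, one has Σ_{j,k,l=1}^p θ(u_{1,j}u_{2,k}*u_{3,l} ⊗ v_{1,j}v_{2,k}*v_{3,l}) = θ(x₁) θ(x₂)* θ(x₃). Then there exist a complex Hilbert space K and semi-commuting ternary morphisms φ : 𝒰 → B(K,L) and ψ : 𝒱 → B(H,K) such that θ(u ⊗ v) = φ(u) ψ(v) for all u ∈ 𝒰 and v ∈ 𝒱. -/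

import Mathlib

open ContinuousLinearMap
open scoped TensorProduct

universe u

/-- A bundled complex Hilbert space. -/
structure HilbertC : Type (u + 1) where
  carrier : Type u
  [nacg : NormedAddCommGroup carrier]
  [ips : InnerProductSpace ℂ carrier]
  [cs : CompleteSpace carrier]

attribute [instance] HilbertC.nacg HilbertC.ips HilbertC.cs

/-- A linear map `φ` on a TRO `𝒰 ⊆ B(K₀, L₀)` is a ternary morphism if it
satisfies `φ(S T* R) = φ(S) φ(T)* φ(R)` for all `S, T, R ∈ 𝒰`. -/
def IsTernaryHom
    {K₀ L₀ K L : Type*}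
    [NormedAddCommGroup K₀] [InnerProductSpace ℂ K₀] [CompleteSpace K₀]
    [NormedAddCommGroup L₀] [InnerProductSpace ℂ L₀] [CompleteSpace L₀]
    [NormedAddCommGroup K] [InnerProductSpace ℂ K] [CompleteSpace K]
    [NormedAddCommGroup L] [InnerProductSpace ℂ L] [CompleteSpace L]
    (𝒰 : Submodule ℂ (K₀ →L[ℂ] L₀)) (φ : ↥𝒰 →ₗ[ℂ] (K →L[ℂ] L)) : Prop :=
  ∀ (s t r : 𝒰)
    (h : (s : K₀ →L[ℂ] L₀) ∘L (adjoint (t : K₀ →L[ℂ] L₀)) ∘L (r : K₀ →L[ℂ] L₀) ∈ 𝒰),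
    φ ⟨(s : K₀ →L[ℂ] L₀) ∘L (adjoint (t : K₀ →L[ℂ] L₀)) ∘L (r : K₀ →L[ℂ] L₀), h⟩
      = φ s ∘L (adjoint (φ t)) ∘L φ r

/-!
Restrict to the closed span of the ranges of `θ`. There the *-algebras of left multipliers of `𝒰`
and of `𝒱` act by commuting representations `ρ` and `σ`, determined by
`ρ(a) θ(u ⊗ v) = θ(a u ⊗ v)` and `σ(b) θ(u ⊗ v) = θ(u ⊗ b v)`, and
`θ(u ⊗ v) θ(u' ⊗ v')* = ρ(u u'*) σ(v v'*)`. The kernel `(u, u') ↦ ρ(u u'*)` is positive, so its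
Kolmogorov decomposition is a ternary morphism `φ` with `φ(u) φ(u')* = ρ(u u'*)`. The
representation `σ` transports along `φ` to a representation `τ` on `K` which commutes with
`φ(u)* φ(u')`, and `ψ(v)* φ(u)* := θ(u ⊗ v)*` is then well defined, with `ψ(v) ψ(v')* = τ(v v'*)`.
-/

open scoped InnerProduct

section TotalFamilies

variable {X Y H E E' : Type*}
  [NormedAddCommGroup H] [InnerProductSpace ℂ H]
  [NormedAddCommGroup E] [InnerProductSpace ℂ E] [NormedAddCommGroup E'] [InnerProductSpace ℂ E']

/-- The synthesis map `f ↦ ∑ x, T x (f x)` of a family of operators `T x : H → E`. -/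
noncomputable def synthesis (T : X → H →L[ℂ] E) : (X →₀ H) →ₗ[ℂ] E :=
  Finsupp.lsum ℂ fun x => (T x : H →ₗ[ℂ] E)

/-- A family of operators `T x : H → E` is total if the ranges of its members span a dense subspace
of `E`. -/
def IsTotalFamily (T : X → H →L[ℂ] E) : Prop :=
  DenseRange (synthesis T)

lemma synthesis_apply (T : X → H →L[ℂ] E) (f : X →₀ H) :
    synthesis T f = f.sum fun x h => T x h :=
  rfl

lemma synthesis_single (T : X → H →L[ℂ] E) (x : X) (h : H) :
    synthesis T (Finsupp.single x h) = T x h := by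
  simp [synthesis]

lemma synthesis_comp_left (S : E →L[ℂ] E') (T : X → H →L[ℂ] E) (f : X →₀ H) :
    synthesis (fun x => S ∘L T x) f = S (synthesis T f) := by
  simp [synthesis_apply, map_finsuppSum]

lemma synthesis_add (T T' : X → H →L[ℂ] E) : synthesis (T + T') = synthesis T + synthesis T' := by
  ext; simp [synthesis]

lemma synthesis_smul (c : ℂ) (T : X → H →L[ℂ] E) : synthesis (c • T) = c • synthesis T := by
  ext; simp [synthesis]

lemma IsTotalFamily.of_comp {T : Y → H →L[ℂ] E} {g : X → Y} (hT : IsTotalFamily (T ∘ g)) :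
    IsTotalFamily T := by
  refine hT.mono ?_
  rintro _ ⟨f, rfl⟩
  refine ⟨f.mapDomain g, ?_⟩
  rw [synthesis_apply, synthesis_apply, Finsupp.sum_mapDomain_index (by simp) (by simp)]
  rfl

lemma IsTotalFamily.eq_of_comp_eq {T : X → H →L[ℂ] E} (hT : IsTotalFamily T)
    {R S : E →L[ℂ] E'} (h : ∀ x, R ∘L T x = S ∘L T x) : R = S := by
  refine DFunLike.coe_injective (hT.equalizer R.continuous S.continuous ?_)
  ext f
  simp only [Function.comp_apply, ← synthesis_comp_left, h]

lemma IsTotalFamily.exists_comp_eq_of_norm_le [CompleteSpace E'] {T : X → H →L[ℂ] E}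
    (hT : IsTotalFamily T) {T' : X → H →L[ℂ] E'} {C : ℝ}
    (h : ∀ f, ‖synthesis T' f‖ ≤ C * ‖synthesis T f‖) :
    ∃ S : E →L[ℂ] E', ∀ x, S ∘L T x = T' x := by
  refine ⟨(synthesis T').extendOfNorm (synthesis T), fun x => ?_⟩
  ext y
  simpa only [synthesis_single, comp_apply] using
    LinearMap.extendOfNorm_eq hT ⟨C, h⟩ (Finsupp.single x y)

variable [CompleteSpace H] [CompleteSpace E] [CompleteSpace E']

lemma isTotalFamily_of_adjoint_eq_zero {T : X → H →L[ℂ] E}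
    (h : ∀ e, (∀ x, adjoint (T x) e = 0) → e = 0) : IsTotalFamily T := by
  rw [IsTotalFamily, DenseRange, ← LinearMap.coe_range,
    Submodule.dense_iff_topologicalClosure_eq_top, Submodule.topologicalClosure_eq_top_iff,
    Submodule.eq_bot_iff]
  refine fun e he => h e fun x => ext_inner_left ℂ fun y => ?_
  rw [adjoint_inner_right, inner_zero_right, ← synthesis_single]
  exact he _ (LinearMap.mem_range_self _ _)

lemma IsTotalFamily.eq_of_adjoint_comp_eq {T : X → H →L[ℂ] E} (hT : IsTotalFamily T)
    {R S : E' →L[ℂ] E} (h : ∀ x, (T x)† ∘L R = (T x)† ∘L S) : R = S := by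
  refine adjoint.injective (hT.eq_of_comp_eq fun x => adjoint.injective ?_)
  simpa only [adjoint_comp, adjoint_adjoint] using h x

lemma IsTotalFamily.eq_of_adjoint_comp_comp_eq {T : X → H →L[ℂ] E} (hT : IsTotalFamily T)
    {R S : E →L[ℂ] E} (h : ∀ x y, (T x)† ∘L R ∘L T y = (T x)† ∘L S ∘L T y) : R = S :=
  hT.eq_of_comp_eq fun y => hT.eq_of_adjoint_comp_eq fun x => h x y

lemma inner_synthesis_eq_of_adjoint_comp_eq {S T : X → H →L[ℂ] E} {S' T' : X → H →L[ℂ] E'}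
    (h : ∀ x y, (S x)† ∘L T y = (S' x)† ∘L T' y) (f g : X →₀ H) :
    inner ℂ (synthesis S f) (synthesis T g) = inner ℂ (synthesis S' f) (synthesis T' g) := by
  have inner_eq (x y : X) (v w : H) :
      inner ℂ (S x v) (T y w) = inner ℂ (S' x v) (T' y w) := by
    simpa only [comp_apply, adjoint_inner_right] using
      congr(inner ℂ v ($(h x y) w))
  simp only [synthesis_apply, Finsupp.sum, sum_inner, inner_sum, inner_eq]

lemma IsTotalFamily.exists_comp_eq_of_adjoint_comp_eq {T : X → H →L[ℂ] E} (hT : IsTotalFamily T)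
    {T' : X → H →L[ℂ] E'} (R : E →L[ℂ] E) (h : ∀ x y, (T' x)† ∘L T' y = (T x)† ∘L R ∘L T y) :
    ∃ S : E →L[ℂ] E', ∀ x, S ∘L T x = T' x := by
  refine hT.exists_comp_eq_of_norm_le (C := √‖R‖) fun f => ?_
  have inner_eq := inner_synthesis_eq_of_adjoint_comp_eq h f f
  rw [synthesis_comp_left] at inner_eq
  refine (sq_le_sq₀ (by positivity) (by positivity)).mp ?_
  calc ‖synthesis T' f‖ ^ 2
      = ‖inner ℂ (synthesis T f) (R (synthesis T f))‖ := by
        rw [← inner_eq, inner_self_eq_norm_sq_to_K]; simp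
    _ ≤ ‖synthesis T f‖ * (‖R‖ * ‖synthesis T f‖) :=
        (norm_inner_le_norm _ _).trans (by gcongr; exact R.le_opNorm _)
    _ = (√‖R‖ * ‖synthesis T f‖) ^ 2 := by
        rw [mul_pow, Real.sq_sqrt (norm_nonneg R)]; ring

lemma exists_isometry_isTotalFamily {L : Type u} [NormedAddCommGroup L]
    [InnerProductSpace ℂ L] [CompleteSpace L] (T : X → H →L[ℂ] L) :
    ∃ (𝕄 : HilbertC.{u}) (W : 𝕄.carrier →L[ℂ] L), W† ∘L W = .id ℂ 𝕄.carrier ∧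
      (∀ x, W ∘L W† ∘L T x = T x) ∧ IsTotalFamily fun x => W† ∘L T x := by
  let Z : Submodule ℂ L := ⨅ x, LinearMap.ker ((T x)†).toLinearMap
  have mem_Z {w : L} : w ∈ Z ↔ ∀ x, adjoint (T x) w = 0 := by simp [Z]
  have T_mem (x : X) (h : H) : T x h ∈ Zᗮ := fun w hw => by
    rw [← adjoint_inner_left, mem_Z.mp hw, inner_zero_left]
  refine ⟨⟨Zᗮ⟩, Zᗮ.subtypeL, ?_, fun x => ?_, isTotalFamily_of_adjoint_eq_zero fun e he => ?_⟩
  · ext e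
    simp [Submodule.adjoint_subtypeL]
  · ext h
    rw [Submodule.adjoint_subtypeL]
    exact Submodule.starProjection_eq_self_iff.mpr (T_mem x h)
  · have e_mem : (e : L) ∈ Z := mem_Z.mpr fun x => by
      have := he x
      rw [adjoint_comp, adjoint_adjoint] at this
      exact this
    exact Subtype.ext (inner_self_eq_zero.mp (e.2 e e_mem))

lemma eq_of_comp_adjoint_eq {S T : H →L[ℂ] E} (hS : S ∘L S† = T ∘L S†)
    (hT : S ∘L T† = T ∘L T†) : S = T := by
  refine sub_eq_zero.mp (adjoint.injective ?_)
  rw [map_zero, ← adjoint_comp_self_eq_zero_iff, adjoint_adjoint, map_sub, comp_sub, sub_comp,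
    sub_comp, hS, hT, sub_self, sub_self, sub_self]

lemma adjoint_comp_eq_of_comp_eq {S S' T T' : H →L[ℂ] E}
    (hS : S ∘L S† ∘L T = S ∘L S'† ∘L T') (hS' : S' ∘L S† ∘L T = S' ∘L S'† ∘L T') :
    S† ∘L T = S'† ∘L T' := by
  rw [← sub_eq_zero, ← adjoint_comp_self_eq_zero_iff]
  simp only [map_sub, adjoint_comp, adjoint_adjoint, sub_comp, comp_sub, comp_assoc, hS, hS',
    sub_self]

end TotalFamilies

section CStarRepresentations

variable {A X H E : Type*} [CStarAlgebra A]
  [NormedAddCommGroup H] [InnerProductSpace ℂ H] [CompleteSpace H]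
  [NormedAddCommGroup E] [InnerProductSpace ℂ E] [CompleteSpace E]

lemma exists_star_mul_self_add_star_mul_self_eq_norm_sq (a : A) :
    ∃ d : A, star a * a + star d * d = ((‖a‖ ^ 2 : ℝ) : ℂ) • (1 : A) := by
  let _ := CStarAlgebra.spectralOrder A
  have := CStarAlgebra.spectralOrderedRing A
  obtain ⟨d, hd⟩ := CStarAlgebra.nonneg_iff_eq_star_mul_self.mp
    (sub_nonneg.mpr (CStarAlgebra.star_mul_le_algebraMap_norm_sq (a := a)))
  refine ⟨d, ?_⟩
  rw [← hd, add_sub_cancel, Algebra.algebraMap_eq_smul_one, Complex.coe_smul]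

variable {F : A →ₗ[ℂ] (X → H →L[ℂ] E)}

lemma norm_synthesis_le_of_adjoint_comp_eq
    (hF : ∀ a b x y, (F a x)† ∘L F b y = (F 1 x)† ∘L F (star a * b) y) (a : A) (f : X →₀ H) :
    ‖synthesis (F a) f‖ ≤ ‖a‖ * ‖synthesis (F 1) f‖ := by
  have norm_sq_eq (b : A) : ((‖synthesis (F b) f‖ ^ 2 : ℝ) : ℂ) =
      inner ℂ (synthesis (F 1) f) (synthesis (F (star b * b)) f) := by
    rw [← inner_synthesis_eq_of_adjoint_comp_eq (hF b b), inner_self_eq_norm_sq_to_K]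
    norm_cast
  obtain ⟨d, hd⟩ := exists_star_mul_self_add_star_mul_self_eq_norm_sq a
  have key : ‖synthesis (F a) f‖ ^ 2 + ‖synthesis (F d) f‖ ^ 2 =
      ‖a‖ ^ 2 * ‖synthesis (F 1) f‖ ^ 2 := by
    rw [← Complex.ofReal_inj, Complex.ofReal_add, Complex.ofReal_mul, norm_sq_eq, norm_sq_eq,
      ← inner_add_right, ← LinearMap.add_apply, ← synthesis_add, ← map_add, hd, map_smul,
      synthesis_smul, LinearMap.smul_apply, inner_smul_right, inner_self_eq_norm_sq_to_K]
    simp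
  refine (sq_le_sq₀ (by positivity) (by positivity)).mp ?_
  rw [mul_pow, ← key]
  exact le_add_of_nonneg_right (by positivity)

lemma exists_starAlgHom_comp_eq_of_isTotalFamily
    (hF : ∀ a b x y, (F a x)† ∘L F b y = (F 1 x)† ∘L F (star a * b) y)
    (h1 : IsTotalFamily (F 1)) :
    ∃ ρ : A →⋆ₐ[ℂ] (E →L[ℂ] E), ∀ a b x, ρ a ∘L F b x = F (a * b) x := by
  choose ρ hρ using fun a =>
    h1.exists_comp_eq_of_norm_le (norm_synthesis_le_of_adjoint_comp_eq hF a)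
  have ρ_star (a : A) : ρ (star a) = (ρ a)† := by
    refine h1.eq_of_adjoint_comp_comp_eq fun x y => ?_
    rw [hρ, ← comp_assoc, ← adjoint_comp, hρ, hF a, mul_one]
  have ρ_mul (a b : A) : ρ (a * b) = ρ a * ρ b := by
    refine h1.eq_of_adjoint_comp_comp_eq fun x y => ?_
    calc (F 1 x)† ∘L ρ (a * b) ∘L F 1 y
        = (F (star a) x)† ∘L F b y := by rw [hρ, hF (star a), star_star]
      _ = (F 1 x)† ∘L (ρ a * ρ b) ∘L F 1 y := by
        rw [← hρ (star a), ← hρ b, ρ_star, adjoint_comp, adjoint_adjoint]; rfl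
  have ρ_add (a b : A) : ρ (a + b) = ρ a + ρ b :=
    h1.eq_of_comp_eq fun x => by rw [hρ, add_comp, hρ, hρ, map_add, Pi.add_apply]
  have ρ_algebraMap (c : ℂ) : ρ (algebraMap ℂ A c) = algebraMap ℂ (E →L[ℂ] E) c :=
    h1.eq_of_comp_eq fun x => by
      rw [hρ, Algebra.algebraMap_eq_smul_one, Algebra.algebraMap_eq_smul_one, map_smul,
        Pi.smul_apply, smul_comp, one_def, id_comp]
  refine ⟨{ toFun := ρ
            map_one' := by simpa using ρ_algebraMap 1
            map_mul' := ρ_mul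
            map_zero' := by simpa using ρ_algebraMap 0
            map_add' := ρ_add
            commutes' := ρ_algebraMap
            map_star' := ρ_star }, fun a b x => ?_⟩
  calc ρ a ∘L F b x = (ρ a * ρ b) ∘L F 1 x := by rw [← hρ b]; rfl
    _ = F (a * b) x := by rw [← ρ_mul, hρ]

lemma exists_starAlgHom_intertwining (σ : A →⋆ₐ[ℂ] (H →L[ℂ] H)) {T : X → H →L[ℂ] E}
    (hT : IsTotalFamily T) (hσ : ∀ a x y, Commute (σ a) ((T x)† ∘L T y)) :
    ∃ τ : A →⋆ₐ[ℂ] (E →L[ℂ] E), ∀ a x, τ a ∘L T x = T x ∘L σ a := by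
  let F : A →ₗ[ℂ] (X → H →L[ℂ] E) :=
    { toFun := fun a x => T x ∘L σ a
      map_add' := fun a b => by ext; simp
      map_smul' := fun c a => by ext; simp }
  have F_one : F 1 = T := by ext; simp [F]
  have hF (a b : A) (x y : X) : (F a x)† ∘L F b y = (F 1 x)† ∘L F (star a * b) y := by
    calc (T x ∘L σ a)† ∘L T y ∘L σ b = (σ (star a) * ((T x)† ∘L T y)) * σ b := by
          rw [adjoint_comp, map_star, star_eq_adjoint]; rfl
      _ = ((T x)† ∘L T y) * (σ (star a) * σ b) := by rw [(hσ _ x y).eq, mul_assoc]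
      _ = (F 1 x)† ∘L F (star a * b) y := by rw [F_one, ← map_mul]; rfl
  obtain ⟨τ, hτ⟩ := exists_starAlgHom_comp_eq_of_isTotalFamily hF (by rwa [F_one])
  refine ⟨τ, fun a x => ?_⟩
  rw [← F_one, hτ, mul_one, F_one]
  rfl

end CStarRepresentations

section Positivity

lemma posSemidef_of_forall_finset_submatrix {X R : Type*} [Ring R] [PartialOrder R] [StarRing R]
    {M : Matrix X X R}
    (h : ∀ s : Finset X, (M.submatrix ((↑) : s → X) (↑)).PosSemidef) : M.PosSemidef := by
  classical
  refine ⟨Matrix.IsHermitian.ext fun i j => ?_, fun f => ?_⟩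
  · exact (h {i, j}).isHermitian.apply ⟨i, by simp⟩ ⟨j, by simp⟩
  · have nonneg := (h f.support).2 (f.subtypeDomain (· ∈ f.support))
    have sum_eq (g : X → R → R) :
        ((f.subtypeDomain (· ∈ f.support)).sum fun x => g x) = f.sum g :=
      Finsupp.sum_subtypeDomain_index fun _ hx => hx
    have inner_sum_eq (a : X) (b : R) :
        ((f.subtypeDomain (· ∈ f.support)).sum fun x c => star b * M a x * c) =
          f.sum fun x c => star b * M a x * c :=
      sum_eq fun x c => star b * M a x * c
    simp only [Matrix.submatrix_apply, inner_sum_eq] at nonneg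
    rwa [sum_eq fun a b => f.sum fun x c => star b * M a x * c] at nonneg

lemma exists_adjoint_comp_eq_of_posSemidef {X V : Type u} [NormedAddCommGroup V]
    [InnerProductSpace ℂ V] [CompleteSpace V] {κ : Matrix X X (V →L[ℂ] V)} (hκ : κ.PosSemidef) :
    ∃ (𝕂 : HilbertC.{u}) (Γ : X → V →L[ℂ] 𝕂.carrier),
      IsTotalFamily Γ ∧ ∀ x y, (Γ x)† ∘L Γ y = κ x y := by
  have : Fact κ.PosSemidef := ⟨hκ⟩
  refine ⟨⟨RKHS.OfKernel κ⟩, RKHS.kerFun (RKHS.OfKernel κ), ?_, fun x y => ?_⟩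
  · refine isTotalFamily_of_adjoint_eq_zero fun f hf => RKHS.ext fun x => ?_
    rw [← RKHS.adjoint_kerFun, hf, RKHS.coe_zero, Pi.zero_apply]
  · rw [← RKHS.kernel_apply, RKHS.OfKernel.kernel_ofKernel]

variable {A : Type*} [CStarAlgebra A] [PartialOrder A] [StarOrderedRing A]

lemma exists_eq_star_mul_self_of_coe_nonneg {S : StarSubalgebra ℂ A} [IsClosed (S : Set A)]
    {a : S} (ha : 0 ≤ (a : A)) : ∃ d : S, a = star d * d := by
  have sqrt_mem : CFC.sqrt (a : A) ∈ S := by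
    rw [CFC.sqrt_eq_real_sqrt (a : A)]
    exact cfcₙ_mem _ a.2
  refine ⟨⟨CFC.sqrt a, sqrt_mem⟩, Subtype.ext ?_⟩
  have : star (CFC.sqrt (a : A)) * CFC.sqrt (a : A) = a := by
    rw [(CFC.sqrt_nonneg (a : A)).star_eq, CFC.sqrt_mul_sqrt_self (a : A)]
  exact this.symm

-- Testing the hypothesis on `b = m⁻` works because `m⁻ m m⁻ = -(m⁻)³`.
lemma exists_eq_star_mul_self_of_star_mul_mul_add_star_mul_self_eq_zero {B : Type*}
    [NonUnitalCStarAlgebra B] {m : B} (hm : IsSelfAdjoint m)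
    (h : ∀ b d : B, star b * m * b + star d * d = 0 → d = 0) : ∃ c, m = star c * c := by
  let _ := CStarAlgebra.spectralOrder B
  have := CStarAlgebra.spectralOrderedRing B
  rw [← CStarAlgebra.nonneg_iff_eq_star_mul_self, ← CFC.negPart_eq_zero_iff m hm]
  obtain ⟨s, hs⟩ := CStarAlgebra.nonneg_iff_eq_star_mul_self.mp (CFC.negPart_nonneg m)
  have star_negPart : star m⁻ = m⁻ := (CFC.negPart_nonneg m).star_eq
  have negPart_mul : m⁻ * m = -(m⁻ * m⁻) := by
    nth_rewrite 2 [← CFC.posPart_sub_negPart m hm]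
    rw [mul_sub, CFC.negPart_mul_posPart, zero_sub]
  have s_mul_negPart : s * m⁻ = 0 := by
    refine h m⁻ _ ?_
    calc star m⁻ * m * m⁻ + star (s * m⁻) * (s * m⁻)
        = m⁻ * m * m⁻ + m⁻ * (star s * s) * m⁻ := by
          rw [star_mul, star_negPart]; simp only [mul_assoc]
      _ = 0 := by rw [← hs, negPart_mul, neg_mul, neg_add_cancel]
  refine CStarRing.star_mul_self_eq_zero_iff _ |>.mp ?_
  rw [star_negPart]
  nth_rewrite 1 [hs]
  rw [mul_assoc, s_mul_negPart, mul_zero]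

lemma eq_zero_of_star_mul_self_apply_self_nonpos {n : Type*} [Fintype n] {D : CStarMatrix n n A}
    (hD : ∀ i, (star D * D) i i ≤ 0) : D = 0 := by
  ext k i
  have sum_nonpos : ∑ k, star (D k i) * D k i ≤ 0 := hD i
  have summand_nonneg (k : n) : 0 ≤ star (D k i) * D k i := star_mul_self_nonneg _
  have sum_eq := le_antisymm sum_nonpos (Finset.sum_nonneg fun k _ => summand_nonneg k)
  exact CStarRing.star_mul_self_eq_zero_iff _ |>.mp <|
    (Finset.sum_eq_zero_iff_of_nonneg fun k _ => summand_nonneg k).mp sum_eq k (Finset.mem_univ k)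

lemma exists_eq_star_mul_self_of_forall_sum_star_mul_mul_nonneg {n : Type*} [Fintype n]
    {M : CStarMatrix n n A} (hM : IsSelfAdjoint M)
    (h : ∀ b : n → A, 0 ≤ ∑ i, ∑ j, star (b i) * M i j * b j) :
    ∃ C, M = star C * C := by
  refine exists_eq_star_mul_self_of_star_mul_mul_add_star_mul_self_eq_zero hM fun N D hND => ?_
  refine eq_zero_of_star_mul_self_apply_self_nonpos fun i => ?_
  have apply_eq : (star N * M * N) i i = ∑ j, ∑ k, star (N j i) * M j k * N k i := by
    simp_rw [CStarMatrix.mul_apply, Finset.sum_mul]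
    exact Finset.sum_comm
  rw [eq_neg_of_add_eq_zero_right hND, CStarMatrix.neg_apply, apply_eq]
  exact neg_nonpos.mpr (h fun j => N j i)

end Positivity

section TernaryRings

variable {K L : Type*}
  [NormedAddCommGroup K] [InnerProductSpace ℂ K]
  [NormedAddCommGroup L] [InnerProductSpace ℂ L] [CompleteSpace L]

/-- The operators `a` on `L` such that both `a` and `a*` map `𝒰` into itself by left
multiplication. -/
def leftMultipliers (𝒰 : Submodule ℂ (K →L[ℂ] L)) : StarSubalgebra ℂ (L →L[ℂ] L) where
  carrier := {a | ∀ u ∈ 𝒰, a ∘L u ∈ 𝒰 ∧ a† ∘L u ∈ 𝒰}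
  mul_mem' {a b} ha hb u hu := by
    refine ⟨(ha _ (hb u hu).1).1, ?_⟩
    rw [mul_def, adjoint_comp]
    exact (hb _ (ha u hu).2).2
  add_mem' ha hb u hu := by
    simp only [map_add, add_comp]
    exact ⟨𝒰.add_mem (ha u hu).1 (hb u hu).1, 𝒰.add_mem (ha u hu).2 (hb u hu).2⟩
  algebraMap_mem' c u hu := by
    simp only [Algebra.algebraMap_eq_smul_one, map_smulₛₗ, one_def, adjoint_id, smul_comp, id_comp]
    exact ⟨𝒰.smul_mem c hu, 𝒰.smul_mem _ hu⟩
  star_mem' ha u hu := by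
    simp only [star_eq_adjoint, adjoint_adjoint]
    exact (ha u hu).symm

variable {𝒰 : Submodule ℂ (K →L[ℂ] L)}

noncomputable instance : Module (leftMultipliers 𝒰) 𝒰 where
  smul a u := ⟨(a : L →L[ℂ] L) ∘L (u : K →L[ℂ] L), (a.2 u u.2).1⟩
  one_smul _ := Subtype.ext (id_comp _)
  mul_smul _ _ _ := Subtype.ext (comp_assoc _ _ _)
  smul_zero _ := Subtype.ext (comp_zero _)
  smul_add _ _ _ := Subtype.ext (comp_add _ _ _)
  add_smul _ _ _ := Subtype.ext (add_comp _ _ _)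
  zero_smul _ := Subtype.ext (zero_comp _)

instance : IsScalarTower ℂ (leftMultipliers 𝒰) 𝒰 where
  smul_assoc _ _ _ := Subtype.ext (smul_comp _ _ _)

variable [CompleteSpace K]

/-- A ternary ring of operators: a norm-closed space of operators closed under the ternary product
`(s, t, r) ↦ s t* r`. -/
class IsTRO (𝒰 : Submodule ℂ (K →L[ℂ] L)) : Prop where
  isClosed : IsClosed (𝒰 : Set (K →L[ℂ] L))
  triple_mem : ∀ s ∈ 𝒰, ∀ t ∈ 𝒰, ∀ r ∈ 𝒰, s ∘L t† ∘L r ∈ 𝒰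

/-- The ternary product `s t* r` of a TRO. -/
noncomputable def triple {𝒰 : Submodule ℂ (K →L[ℂ] L)} [IsTRO 𝒰] (s t r : 𝒰) : 𝒰 :=
  ⟨(s : K →L[ℂ] L) ∘L (t : K →L[ℂ] L)† ∘L (r : K →L[ℂ] L), IsTRO.triple_mem _ s.2 _ t.2 _ r.2⟩

instance isClosed_leftMultipliers [h𝒰 : IsTRO 𝒰] :
    IsClosed (leftMultipliers 𝒰 : Set (L →L[ℂ] L)) := by
  have : (leftMultipliers 𝒰 : Set (L →L[ℂ] L)) =
      ⋂ u ∈ 𝒰, (fun a => a ∘L u) ⁻¹' 𝒰 ∩ (fun a => a† ∘L u) ⁻¹' 𝒰 := by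
    ext a
    simp only [Set.mem_iInter]
    rfl
  rw [this]
  refine isClosed_biInter fun u _ => ?_
  exact (h𝒰.isClosed.preimage (by fun_prop)).inter
    (h𝒰.isClosed.preimage (adjoint.continuous.clm_comp continuous_const))

variable [IsTRO 𝒰]

/-- The element `s t*` of the left linking algebra of a TRO, as a left multiplier. -/
noncomputable def mulAdjoint (s t : 𝒰) : leftMultipliers 𝒰 :=
  ⟨(s : K →L[ℂ] L) ∘L (t : K →L[ℂ] L)†, fun u hu =>
    ⟨IsTRO.triple_mem _ s.2 _ t.2 _ hu, by
      rw [adjoint_comp, adjoint_adjoint]; exact IsTRO.triple_mem _ t.2 _ s.2 _ hu⟩⟩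

lemma mulAdjoint_smul (s t r : 𝒰) : mulAdjoint s t • r = triple s t r := rfl

lemma star_mulAdjoint (s t : 𝒰) : star (mulAdjoint s t) = mulAdjoint t s :=
  Subtype.ext <| show ((s : K →L[ℂ] L) ∘L (t : K →L[ℂ] L)†)† = _ by
    rw [adjoint_comp, adjoint_adjoint]; rfl

lemma mul_mulAdjoint (a : leftMultipliers 𝒰) (s t : 𝒰) :
    a * mulAdjoint s t = mulAdjoint (a • s) t := rfl

lemma mulAdjoint_mul (a : leftMultipliers 𝒰) (s t : 𝒰) :
    mulAdjoint s t * a = mulAdjoint s (star a • t) :=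
  star_injective <| by rw [star_mul, star_mulAdjoint, star_mulAdjoint, mul_mulAdjoint]

lemma mulAdjoint_add_left (s s' t : 𝒰) :
    mulAdjoint (s + s') t = mulAdjoint s t + mulAdjoint s' t :=
  Subtype.ext (add_comp _ _ _)

lemma triple_smul_smul (a b : leftMultipliers 𝒰) (s t r : 𝒰) :
    triple s (a • t) (b • r) = triple s t ((star a * b) • r) := by
  rw [← mulAdjoint_smul, ← mulAdjoint_smul, ← mul_smul, ← mul_smul, ← mul_assoc,
    mulAdjoint_mul _ s t, star_star]

lemma nonneg_mulAdjoint_self (u : 𝒰) : 0 ≤ (mulAdjoint u u : L →L[ℂ] L) :=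
  (nonneg_iff_isPositive _).mpr (isPositive_self_comp_adjoint _)

lemma mulAdjoint_sum_sum {n : Type*} (s : Finset n) (u : n → 𝒰) :
    mulAdjoint (∑ i ∈ s, u i) (∑ j ∈ s, u j) = ∑ i ∈ s, ∑ j ∈ s, mulAdjoint (u i) (u j) := by
  ext1
  simp only [mulAdjoint, AddSubmonoidClass.coe_finsetSum, map_sum, comp_finsetSum, finsetSum_comp]
  exact Finset.sum_comm

lemma exists_mulAdjoint_eq_sum_star_mul {n : Type*} [Fintype n] (u : n → 𝒰) :
    ∃ c : Matrix n n (leftMultipliers 𝒰), ∀ i j,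
      mulAdjoint (u i) (u j) = ∑ k, star (c k i) * c k j := by
  let _ := CStarAlgebra.spectralOrder (leftMultipliers 𝒰)
  have := CStarAlgebra.spectralOrderedRing (leftMultipliers 𝒰)
  let M : CStarMatrix n n (leftMultipliers 𝒰) := .ofMatrix fun i j => mulAdjoint (u i) (u j)
  have hM : IsSelfAdjoint M :=
    CStarMatrix.ext fun i j => star_mulAdjoint (u j) (u i)
  obtain ⟨C, hC⟩ := exists_eq_star_mul_self_of_forall_sum_star_mul_mul_nonneg hM fun b => by
    let w : 𝒰 := ∑ i, star (b i) • u i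
    have sum_eq : ∑ i, ∑ j, star (b i) * M i j * b j = mulAdjoint w w := by
      rw [mulAdjoint_sum_sum]
      simp only [← mul_mulAdjoint, ← mulAdjoint_mul, mul_assoc]
      rfl
    obtain ⟨d, hd⟩ := exists_eq_star_mul_self_of_coe_nonneg (nonneg_mulAdjoint_self w)
    rw [sum_eq, hd]
    exact star_mul_self_nonneg d
  exact ⟨C, fun i j => congr($hC i j)⟩

end TernaryRings

section InducedTernaryHoms

variable {K L K' E : Type*}
  [NormedAddCommGroup K] [InnerProductSpace ℂ K] [CompleteSpace K]
  [NormedAddCommGroup L] [InnerProductSpace ℂ L] [CompleteSpace L]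
  [NormedAddCommGroup K'] [InnerProductSpace ℂ K'] [CompleteSpace K']
  [NormedAddCommGroup E] [InnerProductSpace ℂ E] [CompleteSpace E]
  {𝒰 : Submodule ℂ (K →L[ℂ] L)} [IsTRO 𝒰]

lemma exists_isTernaryHom_of_comp_adjoint_eq {T : 𝒰 → K' →L[ℂ] E}
    (ρ : leftMultipliers 𝒰 →⋆ₐ[ℂ] (E →L[ℂ] E))
    (hT : ∀ u u', T u ∘L (T u')† = ρ (mulAdjoint u u')) :
    ∃ φ : 𝒰 →ₗ[ℂ] (K' →L[ℂ] E), IsTernaryHom 𝒰 φ ∧ ∀ u, φ u = T u := by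
  have T_smul (a : leftMultipliers 𝒰) (u : 𝒰) : T (a • u) = ρ a ∘L T u := by
    have h (y : 𝒰) : T (a • u) ∘L (T y)† = (ρ a ∘L T u) ∘L (T y)† := by
      rw [comp_assoc, hT, hT, ← mul_mulAdjoint, map_mul, mul_def]
    refine eq_of_comp_adjoint_eq (h _) ?_
    rw [adjoint_comp, ← comp_assoc, h, comp_assoc]
  have T_add (u v : 𝒰) : T (u + v) = T u + T v := by
    have h (y : 𝒰) : T (u + v) ∘L (T y)† = (T u + T v) ∘L (T y)† := by
      rw [add_comp, hT, hT, hT, mulAdjoint_add_left, map_add]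
    refine eq_of_comp_adjoint_eq (h _) ?_
    rw [map_add, comp_add, h, h, comp_add]
  refine ⟨{ toFun := T, map_add' := T_add, map_smul' := fun c u => ?_ }, ?_, fun _ => rfl⟩
  · rw [← algebraMap_smul (leftMultipliers 𝒰) c u, T_smul, AlgHomClass.commutes,
      Algebra.algebraMap_eq_smul_one, smul_comp, one_def, id_comp, RingHom.id_apply]
  · intro s t r _
    change T (mulAdjoint s t • r) = T s ∘L (T t)† ∘L T r
    rw [T_smul, ← hT, comp_assoc]

lemma posSemidef_mulAdjoint (ρ : leftMultipliers 𝒰 →⋆ₐ[ℂ] (E →L[ℂ] E)) :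
    (Matrix.of fun u u' : 𝒰 => ρ (mulAdjoint u u')).PosSemidef := by
  refine posSemidef_of_forall_finset_submatrix fun s => ?_
  obtain ⟨c, hc⟩ := exists_mulAdjoint_eq_sum_star_mul ((↑) : s → 𝒰)
  convert Matrix.posSemidef_conjTranspose_mul_self (c.map ρ)
  ext1 i j
  simp only [Matrix.submatrix_apply, Matrix.of_apply, hc, Matrix.mul_apply,
    Matrix.conjTranspose_apply, Matrix.map_apply, map_sum, map_mul, map_star]

end InducedTernaryHoms

section TensorTernaryHoms

variable {K₁ L₁ H₂ K₂ H L : Type*}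
  [NormedAddCommGroup K₁] [InnerProductSpace ℂ K₁] [CompleteSpace K₁]
  [NormedAddCommGroup L₁] [InnerProductSpace ℂ L₁] [CompleteSpace L₁]
  [NormedAddCommGroup H₂] [InnerProductSpace ℂ H₂] [CompleteSpace H₂]
  [NormedAddCommGroup K₂] [InnerProductSpace ℂ K₂] [CompleteSpace K₂]
  [NormedAddCommGroup H] [InnerProductSpace ℂ H] [CompleteSpace H]
  [NormedAddCommGroup L] [InnerProductSpace ℂ L] [CompleteSpace L]
  {𝒰 : Submodule ℂ (K₁ →L[ℂ] L₁)} [IsTRO 𝒰] {𝒱 : Submodule ℂ (H₂ →L[ℂ] K₂)} [IsTRO 𝒱]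

/-- A linear map on the algebraic tensor product of two TROs that preserves the ternary product of
elementary tensors. -/
def IsTensorTernaryHom (θ : 𝒰 ⊗[ℂ] 𝒱 →ₗ[ℂ] (H →L[ℂ] L)) : Prop :=
  ∀ (u₁ u₂ u₃ : 𝒰) (v₁ v₂ v₃ : 𝒱), θ (triple u₁ u₂ u₃ ⊗ₜ triple v₁ v₂ v₃) =
    θ (u₁ ⊗ₜ v₁) ∘L (θ (u₂ ⊗ₜ v₂))† ∘L θ (u₃ ⊗ₜ v₃)

variable {θ : 𝒰 ⊗[ℂ] 𝒱 →ₗ[ℂ] (H →L[ℂ] L)}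

namespace IsTensorTernaryHom

lemma comp_comm (hθ : IsTensorTernaryHom θ) :
    IsTensorTernaryHom (θ ∘ₗ (TensorProduct.comm ℂ 𝒱 𝒰).toLinearMap) :=
  fun v₁ v₂ v₃ u₁ u₂ u₃ => hθ u₁ u₂ u₃ v₁ v₂ v₃

lemma adjoint_comp_smul_tmul (hθ : IsTensorTernaryHom θ) (a b : leftMultipliers 𝒰) (u u' : 𝒰)
    (v v' : 𝒱) : (θ ((a • u) ⊗ₜ v))† ∘L θ ((b • u') ⊗ₜ v') =
      (θ (u ⊗ₜ v))† ∘L θ (((star a * b) • u') ⊗ₜ v') := by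
  have comp_eq (s : 𝒰) (w : 𝒱) : θ (s ⊗ₜ w) ∘L (θ ((a • u) ⊗ₜ v))† ∘L θ ((b • u') ⊗ₜ v') =
      θ (s ⊗ₜ w) ∘L (θ (u ⊗ₜ v))† ∘L θ (((star a * b) • u') ⊗ₜ v') := by
    rw [← hθ, ← hθ, triple_smul_smul]
  exact adjoint_comp_eq_of_comp_eq (comp_eq _ _) (comp_eq _ _)

lemma exists_starAlgHom_comp_tmul (hθ : IsTensorTernaryHom θ)
    (hθ_total : IsTotalFamily fun x : 𝒰 × 𝒱 => θ (x.1 ⊗ₜ x.2)) :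
    ∃ ρ : leftMultipliers 𝒰 →⋆ₐ[ℂ] (L →L[ℂ] L), ∀ a u v, ρ a ∘L θ (u ⊗ₜ v) = θ ((a • u) ⊗ₜ v) := by
  let F : leftMultipliers 𝒰 →ₗ[ℂ] (𝒰 × 𝒱 → H →L[ℂ] L) :=
    { toFun := fun a x => θ ((a • x.1) ⊗ₜ x.2)
      map_add' := fun a b => by
        ext1 x; rw [add_smul, TensorProduct.add_tmul, map_add, Pi.add_apply]
      map_smul' := fun c a => by
        ext1 x; rw [smul_assoc, ← TensorProduct.smul_tmul', map_smul]; rfl }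
  have F_one (x : 𝒰 × 𝒱) : F 1 x = θ (x.1 ⊗ₜ x.2) := by
    change θ (((1 : leftMultipliers 𝒰) • x.1) ⊗ₜ x.2) = _
    rw [one_smul]
  obtain ⟨ρ, hρ⟩ := exists_starAlgHom_comp_eq_of_isTotalFamily (F := F)
    (fun a b x y => by rw [F_one]; exact hθ.adjoint_comp_smul_tmul a b x.1 y.1 x.2 y.2)
    (by rwa [funext F_one])
  refine ⟨ρ, fun a u v => ?_⟩
  rw [← F_one (u, v), hρ, mul_one]
  rfl

lemma exists_commute_and_comp_adjoint_eq (hθ : IsTensorTernaryHom θ)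
    (hθ_total : IsTotalFamily fun x : 𝒰 × 𝒱 => θ (x.1 ⊗ₜ x.2)) :
    ∃ (ρ : leftMultipliers 𝒰 →⋆ₐ[ℂ] (L →L[ℂ] L)) (σ : leftMultipliers 𝒱 →⋆ₐ[ℂ] (L →L[ℂ] L)),
      (∀ a b, Commute (ρ a) (σ b)) ∧ ∀ u u' v v',
        θ (u ⊗ₜ v) ∘L (θ (u' ⊗ₜ v'))† = ρ (mulAdjoint u u') ∘L σ (mulAdjoint v v') := by
  have comm_total : IsTotalFamily fun y : 𝒱 × 𝒰 =>
      (θ ∘ₗ (TensorProduct.comm ℂ 𝒱 𝒰).toLinearMap) (y.1 ⊗ₜ y.2) :=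
    .of_comp (g := Prod.swap) hθ_total
  obtain ⟨ρ, hρ⟩ := hθ.exists_starAlgHom_comp_tmul hθ_total
  obtain ⟨σ, hσ⟩ := hθ.comp_comm.exists_starAlgHom_comp_tmul comm_total
  replace hσ (b : leftMultipliers 𝒱) (u : 𝒰) (v : 𝒱) : σ b ∘L θ (u ⊗ₜ v) = θ (u ⊗ₜ (b • v)) :=
    hσ b v u
  refine ⟨ρ, σ, fun a b => hθ_total.eq_of_comp_eq fun x => ?_, fun u u' v v' =>
    hθ_total.eq_of_comp_eq fun x => ?_⟩
  · rw [mul_def, mul_def, comp_assoc, comp_assoc, hσ, hρ, hρ, hσ]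
  · rw [comp_assoc, comp_assoc, ← hθ, hσ, hρ, mulAdjoint_smul, mulAdjoint_smul]

end IsTensorTernaryHom

end TensorTernaryHoms

section Factorization

variable {K₁ L₁ H₂ K₂ H L E : Type u}
  [NormedAddCommGroup K₁] [InnerProductSpace ℂ K₁] [CompleteSpace K₁]
  [NormedAddCommGroup L₁] [InnerProductSpace ℂ L₁] [CompleteSpace L₁]
  [NormedAddCommGroup H₂] [InnerProductSpace ℂ H₂] [CompleteSpace H₂]
  [NormedAddCommGroup K₂] [InnerProductSpace ℂ K₂] [CompleteSpace K₂]
  [NormedAddCommGroup H] [InnerProductSpace ℂ H] [CompleteSpace H]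
  [NormedAddCommGroup L] [InnerProductSpace ℂ L] [CompleteSpace L]
  [NormedAddCommGroup E] [InnerProductSpace ℂ E] [CompleteSpace E]
  {𝒰 : Submodule ℂ (K₁ →L[ℂ] L₁)} {𝒱 : Submodule ℂ (H₂ →L[ℂ] K₂)}

/-- `θ` factors as `θ u v = φ u ψ v` through a pair of semi-commuting ternary morphisms. -/
def HasTernaryFactorization (θ : 𝒰 → 𝒱 → H →L[ℂ] L) : Prop :=
  ∃ (𝕂 : HilbertC.{u}) (φ : 𝒰 →ₗ[ℂ] (𝕂.carrier →L[ℂ] L)) (ψ : 𝒱 →ₗ[ℂ] (H →L[ℂ] 𝕂.carrier)),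
    IsTernaryHom 𝒰 φ ∧ IsTernaryHom 𝒱 ψ ∧
    (∀ u₁ u₂ v₁ v₂, Commute ((φ u₁)† ∘L φ u₂) (ψ v₁ ∘L (ψ v₂)†)) ∧
    ∀ u v, θ u v = φ u ∘L ψ v

lemma HasTernaryFactorization.of_isometry {θ : 𝒰 → 𝒱 → H →L[ℂ] L} (W : E →L[ℂ] L)
    (hW : W† ∘L W = .id ℂ E) (hWθ : ∀ u v, W ∘L W† ∘L θ u v = θ u v)
    (h : HasTernaryFactorization fun u v => W† ∘L θ u v) : HasTernaryFactorization θ := by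
  obtain ⟨𝕂, φ, ψ, hφ, hψ, hcomm, hφψ⟩ := h
  have adjoint_comp_cancel (S T : 𝕂.carrier →L[ℂ] E) : (W ∘L S)† ∘L W ∘L T = S† ∘L T := by
    rw [adjoint_comp, comp_assoc, ← comp_assoc (W†) W, hW, id_comp]
  let Wφ : 𝒰 →ₗ[ℂ] (𝕂.carrier →L[ℂ] L) := (compL ℂ 𝕂.carrier E L W).toLinearMap ∘ₗ φ
  refine ⟨𝕂, Wφ, ψ, fun s t r _ => ?_, hψ, fun u₁ u₂ v₁ v₂ => ?_, fun u v => ?_⟩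
  · change W ∘L φ _ = (W ∘L φ s) ∘L (W ∘L φ t)† ∘L W ∘L φ r
    rw [adjoint_comp_cancel, hφ, comp_assoc]
  · change Commute ((W ∘L φ u₁)† ∘L W ∘L φ u₂) _
    rw [adjoint_comp_cancel]
    exact hcomm u₁ u₂ v₁ v₂
  · exact (hWθ u v).symm.trans congr(W ∘L $(hφψ u v))

variable [IsTRO 𝒰] [IsTRO 𝒱]

lemma exists_isTernaryHom_comp_adjoint_eq (ρ : leftMultipliers 𝒰 →⋆ₐ[ℂ] (E →L[ℂ] E)) :
    ∃ (𝕂 : HilbertC.{u}) (φ : 𝒰 →ₗ[ℂ] (𝕂.carrier →L[ℂ] E)), IsTernaryHom 𝒰 φ ∧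
      (∀ u u', φ u ∘L (φ u')† = ρ (mulAdjoint u u')) ∧ IsTotalFamily fun u => (φ u)† := by
  obtain ⟨𝕂, Γ, hΓ_total, hΓ⟩ := exists_adjoint_comp_eq_of_posSemidef (posSemidef_mulAdjoint ρ)
  obtain ⟨φ, hφ, φ_apply⟩ := exists_isTernaryHom_of_comp_adjoint_eq (T := fun u => (Γ u)†) ρ
    fun u u' => by rw [adjoint_adjoint]; exact hΓ u u'
  have adjoint_φ (u : 𝒰) : (φ u)† = Γ u := by rw [φ_apply, adjoint_adjoint]
  refine ⟨𝕂, φ, hφ, fun u u' => ?_, by simpa only [adjoint_φ] using hΓ_total⟩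
  rw [φ_apply, adjoint_φ]
  exact hΓ u u'

lemma hasTernaryFactorization_of_comp_adjoint_eq {θ : 𝒰 → 𝒱 → H →L[ℂ] L}
    {ρ : leftMultipliers 𝒰 →⋆ₐ[ℂ] (L →L[ℂ] L)} {σ : leftMultipliers 𝒱 →⋆ₐ[ℂ] (L →L[ℂ] L)}
    (hρσ : ∀ a b, Commute (ρ a) (σ b))
    (hθ : ∀ u u' v v', θ u v ∘L (θ u' v')† = ρ (mulAdjoint u u') ∘L σ (mulAdjoint v v')) :
    HasTernaryFactorization θ := by
  obtain ⟨𝕂, φ, hφ, hφρ, hφ_total⟩ := exists_isTernaryHom_comp_adjoint_eq ρ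
  obtain ⟨τ, hτ⟩ := exists_starAlgHom_intertwining σ hφ_total fun b u u' => by
    rw [adjoint_adjoint, hφρ]; exact (hρσ _ b).symm
  have comp_τ (b : leftMultipliers 𝒱) (u : 𝒰) : φ u ∘L τ b = σ b ∘L φ u := by
    refine adjoint.injective ?_
    rw [adjoint_comp, adjoint_comp, ← star_eq_adjoint (τ b), ← star_eq_adjoint (σ b), ← map_star,
      ← map_star, hτ]
  have comp_τ_comp (u u' : 𝒰) (v v' : 𝒱) :
      φ u ∘L τ (mulAdjoint v v') ∘L (φ u')† = θ u v ∘L (θ u' v')† := by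
    rw [hτ, ← comp_assoc, hφρ, hθ]
  choose Ψ hΨ using fun v => hφ_total.exists_comp_eq_of_adjoint_comp_eq
    (T' := fun u => (θ u v)†) (τ (mulAdjoint v v)) fun u u' => by
      rw [adjoint_adjoint, adjoint_adjoint, comp_τ_comp]
  have comp_Ψ (u : 𝒰) (v : 𝒱) : φ u ∘L (Ψ v)† = θ u v := by
    rw [← adjoint_adjoint (θ u v), ← hΨ, adjoint_comp, adjoint_adjoint]
  have Ψ_comp (v v' : 𝒱) : (Ψ v)† ∘L ((Ψ v')†)† = τ (mulAdjoint v v') := by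
    refine hφ_total.eq_of_adjoint_comp_comp_eq fun u u' => ?_
    rw [adjoint_adjoint, adjoint_adjoint, comp_assoc, hΨ, ← comp_assoc, comp_Ψ, comp_τ_comp]
  obtain ⟨ψ, hψ, ψ_apply⟩ := exists_isTernaryHom_of_comp_adjoint_eq τ Ψ_comp
  refine ⟨𝕂, φ, ψ, hφ, hψ, fun u₁ u₂ v₁ v₂ => ?_, fun u v => by rw [ψ_apply, comp_Ψ]⟩
  rw [ψ_apply, ψ_apply, Ψ_comp, commute_iff_eq, mul_def, mul_def, comp_assoc, comp_τ, ← comp_assoc,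
    ← hτ, comp_assoc]

lemma IsTensorTernaryHom.hasTernaryFactorization {θ : 𝒰 ⊗[ℂ] 𝒱 →ₗ[ℂ] (H →L[ℂ] L)}
    (hθ : IsTensorTernaryHom θ) : HasTernaryFactorization fun u v => θ (u ⊗ₜ v) := by
  let T : 𝒰 × 𝒱 → H →L[ℂ] L := fun x => θ (x.1 ⊗ₜ x.2)
  obtain ⟨𝕄, W, hW, hWT, hT_total⟩ := exists_isometry_isTotalFamily T
  let θ' : 𝒰 ⊗[ℂ] 𝒱 →ₗ[ℂ] (H →L[ℂ] 𝕄.carrier) :=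
    (compL ℂ H L 𝕄.carrier (W†)).toLinearMap ∘ₗ θ
  have hθ' : IsTensorTernaryHom θ' := fun u₁ u₂ u₃ v₁ v₂ v₃ => by
    change W† ∘L _ = (W† ∘L _) ∘L (W† ∘L _)† ∘L W† ∘L _
    rw [hθ, adjoint_comp, adjoint_adjoint, comp_assoc, comp_assoc, hWT (u₃, v₃)]
  obtain ⟨ρ, σ, hρσ, hθρσ⟩ := hθ'.exists_commute_and_comp_adjoint_eq hT_total
  exact .of_isometry W hW (fun u v => hWT (u, v))
    (hasTernaryFactorization_of_comp_adjoint_eq hρσ hθρσ)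

end Factorization

/-- Every ternary morphism `θ` of the algebraic tensor product of two
TROs factors as `θ(u ⊗ v) = φ(u) ψ(v)` for semi-commuting ternary morphisms `φ`, `ψ`. -/
theorem statement3
    {K₁ L₁ H₂ K₂ H L : Type u}
    [NormedAddCommGroup K₁] [InnerProductSpace ℂ K₁] [CompleteSpace K₁]
    [NormedAddCommGroup L₁] [InnerProductSpace ℂ L₁] [CompleteSpace L₁]
    [NormedAddCommGroup H₂] [InnerProductSpace ℂ H₂] [CompleteSpace H₂]
    [NormedAddCommGroup K₂] [InnerProductSpace ℂ K₂] [CompleteSpace K₂]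
    [NormedAddCommGroup H] [InnerProductSpace ℂ H] [CompleteSpace H]
    [NormedAddCommGroup L] [InnerProductSpace ℂ L] [CompleteSpace L]
    (𝒰 : Submodule ℂ (K₁ →L[ℂ] L₁)) (𝒱 : Submodule ℂ (H₂ →L[ℂ] K₂))
    (h𝒰closed : IsClosed (𝒰 : Set (K₁ →L[ℂ] L₁)))
    (h𝒱closed : IsClosed (𝒱 : Set (H₂ →L[ℂ] K₂)))
    (h𝒰tro : ∀ S ∈ 𝒰, ∀ T ∈ 𝒰, ∀ R ∈ 𝒰, S ∘L (adjoint T) ∘L R ∈ 𝒰)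
    (h𝒱tro : ∀ S ∈ 𝒱, ∀ T ∈ 𝒱, ∀ R ∈ 𝒱, S ∘L (adjoint T) ∘L R ∈ 𝒱)
    (θ : (↥𝒰 ⊗[ℂ] ↥𝒱) →ₗ[ℂ] (H →L[ℂ] L))
    (hθ : ∀ (p : ℕ) (u₁ u₂ u₃ : Fin p → 𝒰) (v₁ v₂ v₃ : Fin p → 𝒱),
      ∑ j, ∑ k, ∑ l,
          θ ((⟨((u₁ j : K₁ →L[ℂ] L₁)) ∘L (adjoint (u₂ k : K₁ →L[ℂ] L₁)) ∘L
                ((u₃ l : K₁ →L[ℂ] L₁)),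
              h𝒰tro _ (u₁ j).2 _ (u₂ k).2 _ (u₃ l).2⟩ : ↥𝒰) ⊗ₜ[ℂ]
             (⟨((v₁ j : H₂ →L[ℂ] K₂)) ∘L (adjoint (v₂ k : H₂ →L[ℂ] K₂)) ∘L
                ((v₃ l : H₂ →L[ℂ] K₂)),
              h𝒱tro _ (v₁ j).2 _ (v₂ k).2 _ (v₃ l).2⟩ : ↥𝒱))
        = θ (∑ j, (u₁ j) ⊗ₜ[ℂ] (v₁ j)) ∘L
            (adjoint (θ (∑ k, (u₂ k) ⊗ₜ[ℂ] (v₂ k)))) ∘L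
            θ (∑ l, (u₃ l) ⊗ₜ[ℂ] (v₃ l))) :
    ∃ (𝕂 : HilbertC.{u})
      (φ : ↥𝒰 →ₗ[ℂ] (𝕂.carrier →L[ℂ] L)) (ψ : ↥𝒱 →ₗ[ℂ] (H →L[ℂ] 𝕂.carrier)),
      IsTernaryHom 𝒰 φ ∧ IsTernaryHom 𝒱 ψ ∧
      (∀ (u₁ u₂ : 𝒰) (v₁ v₂ : 𝒱),
        Commute ((adjoint (φ u₁)) ∘L (φ u₂)) ((ψ v₁) ∘L (adjoint (ψ v₂)))) ∧
      (∀ (u : 𝒰) (v : 𝒱), θ (u ⊗ₜ[ℂ] v) = (φ u) ∘L (ψ v)) := by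
  have : IsTRO 𝒰 := ⟨h𝒰closed, h𝒰tro⟩
  have : IsTRO 𝒱 := ⟨h𝒱closed, h𝒱tro⟩
  have hθ_tmul : IsTensorTernaryHom θ := fun u₁ u₂ u₃ v₁ v₂ v₃ => by
    have := hθ 1 (fun _ => u₁) (fun _ => u₂) (fun _ => u₃) (fun _ => v₁) (fun _ => v₂) fun _ => v₃
    simp only [Finset.univ_unique, Finset.sum_singleton] at this
    exact this
  exact hθ_tmul.hasTernaryFactorization
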